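/- For every tree T = (A, B, E), bceovs(T, A) = bcevs(T), and moreover this common value is achieved by a sequence consisting only of edge editions, i.e., an optimal sequence that uses no vertex splitting. -/

import Mathlib

/- Common framework: bipartite graphs on vertex set `ℕ` with side labels,
   edge editions, vertex splittings, and the bicluster-editing numbers. -/

namespace BCE

/-- A graph on a finite subset of `ℕ` equipped with a labelling of its
vertices into two sides `A` and `B`. -/
structure BGraph where
  A : Set ℕ
  B : Set ℕ
  finA : A.Finite
  finB : B.Finite
  Adj : ℕ → ℕ → Prop
  symm : ∀ u v, Adj u v → Adj v u

/-- The vertex set of a graph. -/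
def verts (G : BGraph) : Set ℕ := G.A ∪ G.B

/-- The open neighbourhood of a vertex. -/
def nbhd (G : BGraph) (v : ℕ) : Set ℕ := {u | G.Adj v u}

/-- `G = (A, B, E)` is bipartite: the sides are disjoint and every edge joins
a vertex of `A` with a vertex of `B`. -/
def Bipartite (G : BGraph) : Prop :=
  Disjoint G.A G.B ∧
    ∀ u v, G.Adj u v → (u ∈ G.A ∧ v ∈ G.B) ∨ (u ∈ G.B ∧ v ∈ G.A)

/-- A (bipartite) graph is a disjoint union of bicliques iff whenever
`a-b-c-d` is a walk, `a` and `d` are adjacent (equivalently, every connected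
component is a complete bipartite graph). -/
def IsBicliqueUnion (G : BGraph) : Prop :=
  ∀ a b c d, G.Adj a b → G.Adj b c → G.Adj c d → G.Adj a d

/-- The editing operations: deletion of an edge, addition of an edge, and
splitting of a vertex `v` into `v` and a fresh vertex `v'` whose
neighbourhoods `N1`, `N2` cover the neighbourhood of `v`. -/
inductive Op where
  | del : ℕ → ℕ → Op
  | add : ℕ → ℕ → Op
  | split : ℕ → ℕ → Set ℕ → Set ℕ → Op

/-- `op` is a vertex splitting. -/
def IsSplitOp : Op → Prop
  | Op.split _ _ _ _ => True
  | _ => False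

/-- `OpStep sA sB op G G'` : performing the single operation `op` on `G`
yields `G'`; vertex splittings are allowed on side `A` (resp. `B`) only if
`sA` (resp. `sB`) is `true`.  A copy created by a splitting is put on the
same side as the split vertex. -/
inductive OpStep (sA sB : Bool) : Op → BGraph → BGraph → Prop where
  | del {G G' : BGraph} {u v : ℕ}
      (h : G.Adj u v) (hA : G'.A = G.A) (hB : G'.B = G.B)
      (hadj : ∀ x y, G'.Adj x y ↔
        (G.Adj x y ∧ ¬((x = u ∧ y = v) ∨ (x = v ∧ y = u)))) :
      OpStep sA sB (Op.del u v) G G'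
  | add {G G' : BGraph} {u v : ℕ}
      (hu : u ∈ G.A) (hv : v ∈ G.B) (h : ¬ G.Adj u v)
      (hA : G'.A = G.A) (hB : G'.B = G.B)
      (hadj : ∀ x y, G'.Adj x y ↔
        (G.Adj x y ∨ (x = u ∧ y = v) ∨ (x = v ∧ y = u))) :
      OpStep sA sB (Op.add u v) G G'
  | split {G G' : BGraph} {v v' : ℕ} {N1 N2 : Set ℕ}
      (hside : (v ∈ G.A ∧ sA = true) ∨ (v ∈ G.B ∧ sB = true))
      (hfresh : v' ∉ verts G)
      (hcover : N1 ∪ N2 = nbhd G v)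
      (hA : v ∈ G.A → G'.A = insert v' G.A ∧ G'.B = G.B)
      (hB : v ∈ G.B → G'.A = G.A ∧ G'.B = insert v' G.B)
      (hadj : ∀ x y, G'.Adj x y ↔
        ((G.Adj x y ∧ x ≠ v ∧ y ≠ v) ∨ (x = v ∧ y ∈ N1) ∨ (y = v ∧ x ∈ N1) ∨
          (x = v' ∧ y ∈ N2) ∨ (y = v' ∧ x ∈ N2))) :
      OpStep sA sB (Op.split v v' N1 N2) G G'

/-- `ApplySeq sA sB L G G'` : applying the sequence of operations `L`
to `G` yields `G'`. -/
def ApplySeq (sA sB : Bool) : List Op → BGraph → BGraph → Prop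
  | [], G, G' => G' = G
  | op :: L, G, G'' => ∃ G', OpStep sA sB op G G' ∧ ApplySeq sA sB L G' G''

/-- The sequence `L` transforms `G` into a disjoint union of bicliques. -/
def Solves (sA sB : Bool) (L : List Op) (G : BGraph) : Prop :=
  ∃ G', ApplySeq sA sB L G G' ∧ IsBicliqueUnion G'

/-- `bcevs G` : the minimum length of a sequence of edge editions and vertex
splittings transforming `G` into a disjoint union of bicliques. -/
noncomputable def bcevs (G : BGraph) : ℕ :=
  sInf {n | ∃ L, L.length = n ∧ Solves true true L G}

/-- `bceovs G` (that is, `bceovs(G, A)`) : the minimum length of such a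
sequence in which vertex splittings are applied only to vertices of the side
`A` (and their copies, which are also on side `A`). -/
noncomputable def bceovs (G : BGraph) : ℕ :=
  sInf {n | ∃ L, L.length = n ∧ Solves true false L G}

/-- The subgraph of `G` induced by `S`. -/
def induce (G : BGraph) (S : Set ℕ) : BGraph where
  A := G.A ∩ S
  B := G.B ∩ S
  finA := G.finA.subset Set.inter_subset_left
  finB := G.finB.subset Set.inter_subset_left
  Adj := fun u v => G.Adj u v ∧ u ∈ S ∧ v ∈ S
  symm := fun u v h => ⟨G.symm u v h.1, h.2.2, h.2.1⟩

/-- `G` is a tree (as an abstract graph on its vertex set). -/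
def IsTreeB (G : BGraph) : Prop :=
  (SimpleGraph.induce (verts G) (SimpleGraph.fromRel G.Adj)).IsTree

/-- `G` is connected. -/
def ConnectedB (G : BGraph) : Prop :=
  (SimpleGraph.induce (verts G) (SimpleGraph.fromRel G.Adj)).Connected

/-- The set `S` induces a biclique in `G`: every vertex of `S` on side `A` is
adjacent to every vertex of `S` on side `B`. -/
def IsBicliqueOn (G : BGraph) (S : Set ℕ) : Prop :=
  ∀ u ∈ S ∩ G.A, ∀ v ∈ S ∩ G.B, G.Adj u v

/-- The set `S` induces a star in `G`: some centre `c ∈ S` is adjacent to all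
other vertices of `S`, and every edge inside `S` uses the centre. -/
def IsStarOn (G : BGraph) (S : Set ℕ) : Prop :=
  ∃ c ∈ S, (∀ v ∈ S, v ≠ c → G.Adj c v) ∧
    (∀ u ∈ S, ∀ v ∈ S, G.Adj u v → u = c ∨ v = c)

/-- An `A`-partitioning cover of `G`: a collection of subsets of `A ∪ B`
covering all vertices whose traces on `A` form a partition of `A` (every
vertex of `A` lies in a unique member of the collection). -/
def IsAPartCover (G : BGraph) (C : Set (Set ℕ)) : Prop :=
  (∀ X ∈ C, X ⊆ verts G) ∧
  (∀ v ∈ verts G, ∃ X ∈ C, v ∈ X) ∧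
  (∀ a ∈ G.A, ∃! X, X ∈ C ∧ a ∈ X)

/-- The cost of an `A`-partitioning cover: each `a ∈ A` lying in the unique
set `X ∈ C` costs `|(B ∩ X) \ N(a)| + |N(a) \ X|`; each `b ∈ B` lying in `j`
members of `C` costs `j - 1`. -/
noncomputable def coverCost (G : BGraph) (C : Set (Set ℕ)) : ℕ :=
  (∑ᶠ a ∈ G.A, ∑ᶠ X ∈ {X ∈ C | a ∈ X},
      (((G.B ∩ X) \ nbhd G a).ncard + ((nbhd G a) \ X).ncard)) +
  ∑ᶠ b ∈ G.B, ({X ∈ C | b ∈ X}.ncard - 1)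

/-- The twin class of a vertex: all vertices of `G` with the same open
neighbourhood. -/
def twinClass (G : BGraph) (v : ℕ) : Set ℕ :=
  {u ∈ verts G | nbhd G u = nbhd G v}

/-- The twin classes of `G`. -/
def twinClasses (G : BGraph) : Set (Set ℕ) :=
  {T | ∃ v ∈ verts G, T = twinClass G v}

/-- A cover is twin-adapted if every member contains each twin class either
entirely or not at all. -/
def TwinAdapted (G : BGraph) (C : Set (Set ℕ)) : Prop :=
  ∀ T ∈ twinClasses G, ∀ X ∈ C, T ∩ X = ∅ ∨ T ⊆ X

/-- `G` is a cycle with consecutive vertices `p 0, p 1, …, p (m-1)`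
(indices modulo `m`), the vertices of even index forming side `A`. -/
def IsCycleWith (G : BGraph) (p : ℕ → ℕ) (m : ℕ) : Prop :=
  (∀ i j, i < m → j < m → p i = p j → i = j) ∧
  G.A = p '' {i | i < m ∧ i % 2 = 0} ∧
  G.B = p '' {i | i < m ∧ i % 2 = 1} ∧
  (∀ x y, G.Adj x y ↔ ∃ i < m,
    (x = p i ∧ y = p ((i + 1) % m)) ∨ (y = p i ∧ x = p ((i + 1) % m)))

/-- `G` is a path with `l` edges and consecutive vertices `p 0, …, p l`,
the vertices of even index forming side `A`. -/
def IsPathWith (G : BGraph) (p : ℕ → ℕ) (l : ℕ) : Prop :=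
  (∀ i j, i ≤ l → j ≤ l → p i = p j → i = j) ∧
  G.A = p '' {i | i ≤ l ∧ i % 2 = 0} ∧
  G.B = p '' {i | i ≤ l ∧ i % 2 = 1} ∧
  (∀ x y, G.Adj x y ↔ ∃ i < l,
    (x = p i ∧ y = p (i + 1)) ∨ (y = p i ∧ x = p (i + 1)))

end BCE

namespace BCE

/-!
A solution `H` of length `k` projects to `G`: copies of a vertex go to that vertex, and edges agree
except at the edited pairs. The images of the components of `H` are bags that cover `G`, and `k` is
at least the number of edited pairs plus the number of repetitions of vertices among the bags. When
`G` is connected, the bags can be added one at a time so that each new bag shares a vertex with the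
previous ones or is joined to them by an edited pair. Without cycles of length four, a biclique is
a star, so a new bag without missing edges needs one dominating vertex; every missing edge and
every further overlap buys at most one more. Hence `G` has a dominating set of size at most `k + 1`.
Conversely, a dominating set of size `d` in a tree gives a spanning star forest by deleting `d - 1`
edges. So every version of the problem has the optimum `γ - 1`, where `γ` is the domination number,
and it is attained by deletions alone.
-/

variable {G H K : BGraph} {u v : ℕ}

theorem Bipartite.notMem_B (hG : Bipartite G) (hv : v ∈ G.A) : v ∉ G.B :=
  Set.disjoint_left.1 hG.1 hv

theorem Bipartite.ne_of_adj (hG : Bipartite G) (h : G.Adj u v) : u ≠ v := by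
  rintro rfl
  rcases hG.2 u u h with ⟨hA, hB⟩ | ⟨hB, hA⟩ <;> exact hG.notMem_B hA hB

theorem Bipartite.mem_verts_of_adj (hG : Bipartite G) (h : G.Adj u v) : v ∈ verts G :=
  (hG.2 u v h).symm.imp And.right And.right

theorem verts_finite (G : BGraph) : (verts G).Finite :=
  G.finA.union G.finB

/-- The vertex set of `G` as a finset, used to count vertices. -/
noncomputable def vertexFinset (G : BGraph) : Finset ℕ :=
  (verts_finite G).toFinset

@[simp]
theorem mem_vertexFinset : v ∈ vertexFinset G ↔ v ∈ verts G :=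
  (verts_finite G).mem_toFinset

/-! ### Projections -/

/-- `π` maps the vertices of `H` onto those of `G`, respecting the sides, and the edges of `G`
are the images of the edges of `H` except at the pairs in `Z`. This is how the result `H` of an
editing sequence remembers `G`: `π` sends every copy of a vertex to the original, and `Z`
contains the edited pairs. -/
structure ProjectsTo (H G : BGraph) (π : ℕ → ℕ) (Z : Finset (Sym2 ℕ)) : Prop where
  mapsTo_A : Set.MapsTo π H.A G.A
  mapsTo_B : Set.MapsTo π H.B G.B
  surjOn : Set.SurjOn π (verts H) (verts G)
  adj_iff : ∀ a b, s(a, b) ∉ Z → (G.Adj a b ↔ Relation.Map H.Adj π π a b)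

theorem ProjectsTo.refl (G : BGraph) : ProjectsTo G G id ∅ where
  mapsTo_A := Set.mapsTo_id _
  mapsTo_B := Set.mapsTo_id _
  surjOn := Set.surjOn_id _
  adj_iff a b _ := by rw [Relation.map_id_id]

theorem ProjectsTo.trans {π ρ : ℕ → ℕ} {Z W : Finset (Sym2 ℕ)} (hKH : ProjectsTo K H ρ W)
    (hHG : ProjectsTo H G π Z) : ProjectsTo K G (π ∘ ρ) (Z ∪ W.image (Sym2.map π)) where
  mapsTo_A := hHG.mapsTo_A.comp hKH.mapsTo_A
  mapsTo_B := hHG.mapsTo_B.comp hKH.mapsTo_B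
  surjOn := hHG.surjOn.comp hKH.surjOn
  adj_iff a b hab := by
    rw [Finset.notMem_union] at hab
    have hW : ∀ x y, π x = a → π y = b → s(x, y) ∉ W := by
      rintro x y rfl rfl hxy
      exact hab.2 (Finset.mem_image_of_mem (Sym2.map π) hxy)
    rw [hHG.adj_iff a b hab.1, ← Relation.map_map]
    refine exists₂_congr fun x y => and_congr_left fun ⟨hx, hy⟩ => ?_
    exact hKH.adj_iff x y (hW x y hx hy)

variable {sA sB : Bool} {op : Op} {L : List Op}

theorem OpStep.verts_of_split {v' : ℕ} {N₁ N₂ : Set ℕ}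
    (h : OpStep sA sB (.split v v' N₁ N₂) G H) : verts H = insert v' (verts G) := by
  cases h with
  | split hside _ _ hA hB _ =>
    rcases hside with ⟨hv, -⟩ | ⟨hv, -⟩
    · rw [verts, verts, (hA hv).1, (hA hv).2, Set.insert_union]
    · rw [verts, verts, (hB hv).1, (hB hv).2, Set.union_insert]

theorem OpStep.bipartite (h : OpStep sA sB op G H) (hG : Bipartite G) : Bipartite H := by
  obtain ⟨hdisj, hsides⟩ := hG
  cases h with
  | del _ hA hB hadj =>
    refine ⟨hA ▸ hB ▸ hdisj, fun x y hxy => ?_⟩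
    rw [hA, hB]
    exact hsides x y ((hadj x y).1 hxy).1
  | add hu hv _ hA hB hadj =>
    refine ⟨hA ▸ hB ▸ hdisj, fun x y hxy => ?_⟩
    rw [hA, hB]
    rcases (hadj x y).1 hxy with hxy | ⟨rfl, rfl⟩ | ⟨rfl, rfl⟩
    · exact hsides x y hxy
    · exact .inl ⟨hu, hv⟩
    · exact .inr ⟨hv, hu⟩
  | @split _ _ v v' N₁ N₂ hside hfresh hcover hA hB hadj =>
    have hN : ∀ y, y ∈ N₁ ∨ y ∈ N₂ ↔ G.Adj v y := Set.ext_iff.1 hcover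
    rw [Set.disjoint_left] at hdisj
    simp only [verts, Set.mem_union, not_or] at hfresh
    rw [Bipartite, Set.disjoint_left]
    rcases hside with ⟨hv, -⟩ | ⟨hv, -⟩
    · simp only [hA hv, Set.mem_insert_iff, hadj]
      grind
    · simp only [hB hv, Set.mem_insert_iff, hadj]
      grind

theorem ApplySeq.bipartite (h : ApplySeq sA sB L G H) (hG : Bipartite G) : Bipartite H := by
  induction L generalizing G with
  | nil => exact h ▸ hG
  | cons op L ih =>
    obtain ⟨G₁, hop, hL⟩ := h
    exact ih hL (hop.bipartite hG)

theorem OpStep.map_adj_of_split (hG : Bipartite G) {v' : ℕ} {N₁ N₂ : Set ℕ}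
    (h : OpStep sA sB (.split v v' N₁ N₂) G H) :
    Relation.Map H.Adj (Function.update id v' v) (Function.update id v' v) = G.Adj := by
  cases h with
  | split _ hfresh hcover _ _ hadj =>
    have hN : ∀ y, y ∈ N₁ ∨ y ∈ N₂ ↔ G.Adj v y := Set.ext_iff.1 hcover
    have hv' : ∀ x, ¬ G.Adj x v' := fun x hx => hfresh (hG.mem_verts_of_adj hx)
    have hsymm := G.symm
    ext a b
    simp only [Relation.Map, hadj, Function.update_apply, id]
    constructor
    · grind
    · intro hab
      have hcopy : ∀ y, G.Adj v y → ∃ x, (x = v ∧ y ∈ N₁ ∨ x = v' ∧ y ∈ N₂) :=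
        fun y hy => ((hN y).2 hy).elim (fun h => ⟨v, .inl ⟨rfl, h⟩⟩) fun h => ⟨v', .inr ⟨rfl, h⟩⟩
      by_cases ha : a = v
      · obtain ⟨x, hx⟩ := hcopy b (ha ▸ hab)
        exact ⟨x, b, by grind⟩
      by_cases hb : b = v
      · obtain ⟨y, hy⟩ := hcopy a (hsymm _ _ (hb ▸ hab))
        exact ⟨a, y, by grind⟩
      · exact ⟨a, b, by grind⟩

theorem OpStep.projectsTo_of_split (hG : Bipartite G) {v' : ℕ} {N₁ N₂ : Set ℕ}
    (h : OpStep sA sB (.split v v' N₁ N₂) G H) :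
    ProjectsTo H G (Function.update id v' v) ∅ := by
  have hmap := h.map_adj_of_split hG
  have hverts := h.verts_of_split
  have hdisj := hG.1
  rw [Set.disjoint_left] at hdisj
  cases h with
  | split hside hfresh _ hA hB _ =>
    have hfix : ∀ x ∈ verts G, Function.update id v' v x = x := fun x hx =>
      Function.update_of_ne (ne_of_mem_of_not_mem hx hfresh) _ _
    have hsurj : Set.SurjOn (Function.update id v' v) (verts H) (verts G) := fun x hx =>
      ⟨x, hverts ▸ Set.mem_insert_of_mem _ hx, hfix x hx⟩
    refine ⟨?_, ?_, hsurj, fun a b _ => by rw [hmap]⟩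
    all_goals
      intro x hx
      simp only [verts, Set.mem_union] at hfix
      grind [Function.update_self]

theorem OpStep.verts_of_not_split (h : OpStep sA sB op G H) (hop : ¬ IsSplitOp op) :
    verts H = verts G := by
  cases h with
  | del _ hA hB _ | add _ _ _ hA hB _ => rw [verts, hA, hB, ← verts]
  | split => exact absurd trivial hop

theorem OpStep.projectsTo_of_not_split (h : OpStep sA sB op G H) (hop : ¬ IsSplitOp op) :
    ∃ e, ProjectsTo H G id {e} := by
  have hsurj : Set.SurjOn id (verts H) (verts G) := h.verts_of_not_split hop ▸ Set.surjOn_id _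
  cases h with
  | @del _ _ u v _ hA hB hadj | @add _ _ u v _ _ _ hA hB hadj =>
    refine ⟨s(u, v), hA.le, hB.le, hsurj, fun a b hab => ?_⟩
    rw [Finset.mem_singleton, Sym2.eq_iff] at hab
    rw [Relation.map_id_id, hadj]
    tauto
  | split => exact absurd trivial hop

theorem OpStep.exists_projectsTo (hG : Bipartite G) (h : OpStep sA sB op G H) :
    ∃ π Z, ProjectsTo H G π Z ∧
      Z.card + (vertexFinset H).card ≤ (vertexFinset G).card + 1 := by
  by_cases hop : IsSplitOp op
  · cases op with
    | del | add => exact hop.elim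
    | split v v' N₁ N₂ =>
      refine ⟨_, _, h.projectsTo_of_split hG, ?_⟩
      have hinsert : vertexFinset H = insert v' (vertexFinset G) := by
        ext x
        simp [h.verts_of_split]
      rw [Finset.card_empty, zero_add, hinsert]
      exact Finset.card_insert_le _ _
  · obtain ⟨e, he⟩ := h.projectsTo_of_not_split hop
    have hverts : vertexFinset H = vertexFinset G := by
      ext x
      simp [h.verts_of_not_split hop]
    exact ⟨id, {e}, he, by rw [hverts, Finset.card_singleton, add_comm]⟩

theorem ApplySeq.exists_projectsTo (hG : Bipartite G) (h : ApplySeq sA sB L G H) :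
    ∃ π Z, ProjectsTo H G π Z ∧
      Z.card + (vertexFinset H).card ≤ (vertexFinset G).card + L.length := by
  induction L generalizing G with
  | nil =>
    obtain rfl : H = G := h
    exact ⟨id, ∅, .refl H, by simp⟩
  | cons op L ih =>
    obtain ⟨G₁, hop, hL⟩ := h
    obtain ⟨π, Z, hπ, hZ⟩ := hop.exists_projectsTo hG
    obtain ⟨ρ, W, hρ, hW⟩ := ih (hop.bipartite hG) hL
    refine ⟨_, _, hρ.trans hπ, ?_⟩
    have hunion := Finset.card_union_le Z (W.image (Sym2.map π))
    have himage := Finset.card_image_le (s := W) (f := Sym2.map π)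
    rw [List.length_cons]
    lia

/-! ### Dominating sets -/

/-- `G` has no cycle of length four, encoded as: two distinct vertices have at most one common
neighbour. -/
def C4Free (G : BGraph) : Prop :=
  ∀ a a' b b', G.Adj a b → G.Adj a' b → G.Adj a b' → G.Adj a' b' → a = a' ∨ b = b'

/-- `D` dominates `S` in `G`: every vertex of `S` lies in `D` or has a neighbour in `D`. -/
def Dominates (G : BGraph) (D S : Finset ℕ) : Prop :=
  ∀ v ∈ S, v ∈ D ∨ ∃ d ∈ D, G.Adj v d

/-- The domination number `γ` of `G`, the minimum size of a dominating set. Dominating sets are not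
required to consist of vertices; as the edges of a bipartite graph only join vertices, this does
not affect the minimum. -/
noncomputable def dominationNumber (G : BGraph) : ℕ :=
  sInf {n | ∃ D, Dominates G D (vertexFinset G) ∧ D.card = n}

open Classical in
/-- The unordered pairs of vertices in `X` from opposite sides of `G` that are not edges, that is,
the edges that `X` lacks to be a biclique. -/
noncomputable def missingPairs (G : BGraph) (X : Finset ℕ) : Finset (Sym2 ℕ) :=
  X.sym2.filter fun e => ∃ a ∈ G.A, ∃ b ∈ G.B, ¬ G.Adj a b ∧ e = s(a, b)

/-- `X` is a set of vertices of `G` that has the shape of the vertex set of a connected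
bipartite graph: a single vertex, or a set meeting both sides. -/
structure IsBag (G : BGraph) (X : Finset ℕ) : Prop where
  subset_verts : ↑X ⊆ verts G
  card_eq_one_or : X.card = 1 ∨ (∃ a ∈ X, a ∈ G.A) ∧ ∃ b ∈ X, b ∈ G.B

variable {D S U X : Finset ℕ} {a b : ℕ}

theorem Dominates.mono {T : Finset ℕ} (h : Dominates G D T) (hST : S ⊆ T) : Dominates G D S :=
  fun v hv => h v (hST hv)

theorem Dominates.union {D' : Finset ℕ} (h : Dominates G D S) (h' : Dominates G D' U) :
    Dominates G (D ∪ D') (S ∪ U) := by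
  unfold Dominates at *
  grind

theorem mem_missingPairs_iff {e : Sym2 ℕ} : e ∈ missingPairs G X ↔
    e ∈ X.sym2 ∧ ∃ a ∈ G.A, ∃ b ∈ G.B, ¬ G.Adj a b ∧ e = s(a, b) := by
  simp [missingPairs]

theorem mem_missingPairs (ha : a ∈ X) (haA : a ∈ G.A) (hb : b ∈ X) (hbB : b ∈ G.B)
    (hab : ¬ G.Adj a b) : s(a, b) ∈ missingPairs G X := by
  rw [mem_missingPairs_iff, Finset.mk_mem_sym2_iff]
  exact ⟨⟨ha, hb⟩, a, haA, b, hbB, hab, rfl⟩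

theorem not_adj_of_mem_missingPairs (h : s(a, b) ∈ missingPairs G X) : ¬ G.Adj a b := by
  obtain ⟨-, a', -, b', -, hadj, heq⟩ := mem_missingPairs_iff.1 h
  rcases Sym2.eq_iff.1 heq with ⟨rfl, rfl⟩ | ⟨rfl, rfl⟩
  · exact hadj
  · exact fun h => hadj (G.symm _ _ h)

theorem C4Free.exists_dominates_of_isBicliqueOn (hC4 : C4Free G) (hX : IsBag G X)
    (hbiclique : IsBicliqueOn G X) : ∃ c, Dominates G {c} X := by
  rcases hX.card_eq_one_or with hone | ⟨⟨a, ha, haA⟩, b, hb, hbB⟩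
  · obtain ⟨x, rfl⟩ := Finset.card_eq_one.1 hone
    exact ⟨x, fun v hv => .inl hv⟩
  have hadj : ∀ x ∈ X, ∀ y ∈ X, x ∈ G.A → y ∈ G.B → G.Adj x y :=
    fun x hx y hy hxA hyB => hbiclique x ⟨hx, hxA⟩ y ⟨hy, hyB⟩
  by_cases hunique : ∀ a' ∈ X, a' ∈ G.A → a' = a
  · refine ⟨a, fun v hv => ?_⟩
    rcases hX.subset_verts hv with hvA | hvB
    · exact .inl (Finset.mem_singleton.2 (hunique v hv hvA))
    · exact .inr ⟨a, Finset.mem_singleton_self a, G.symm _ _ (hadj a ha v hv haA hvB)⟩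
  · push Not at hunique
    obtain ⟨a', ha', haA', hne⟩ := hunique
    refine ⟨b, fun v hv => ?_⟩
    rcases hX.subset_verts hv with hvA | hvB
    · exact .inr ⟨b, Finset.mem_singleton_self b, hadj v hv b hb hvA hbB⟩
    · have hvb := hC4 a' a v b (hadj a' ha' v hv haA' hvB) (hadj a ha v hv haA hvB)
        (hadj a' ha' b hb haA' hbB) (hadj a ha b hb haA hbB)
      exact .inl (Finset.mem_singleton.2 (hvb.resolve_left hne))

theorem exists_dominates_sdiff_of_pair (hX : ↑X ⊆ verts G) (ha : a ∈ X) (haA : a ∈ G.A)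
    (hb : b ∈ X) (hbB : b ∈ G.B) (S : Finset ℕ) :
    ∃ D, Dominates G D (X \ S) ∧
      D.card ≤ ((missingPairs G X \ S.sym2).erase s(a, b)).card + 2 := by
  classical
  -- A vertex that `{a, b}` does not dominate forms a missing pair with `a` or with `b`.
  let U := (X \ S).filter fun x => (x ≠ a ∧ x ≠ b) ∧ ¬ G.Adj x a ∧ ¬ G.Adj x b
  have hU : ∀ x ∈ U, (x ∈ X ∧ x ∉ S) ∧ (x ≠ a ∧ x ≠ b) ∧ ¬ G.Adj x a ∧ ¬ G.Adj x b := by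
    simp [U]
  have hcard : U.card ≤ ((missingPairs G X \ S.sym2).erase s(a, b)).card := by
    refine Finset.card_le_card_of_injOn (fun x => if x ∈ G.A then s(x, b) else s(a, x)) ?_ ?_
    · intro x hx
      obtain ⟨⟨hxX, hxS⟩, ⟨hxa, hxb⟩, hadja, hadjb⟩ := hU x hx
      dsimp only
      rw [Finset.mem_coe, Finset.mem_erase, Finset.mem_sdiff]
      split_ifs with hxA
      · refine ⟨by grind [Sym2.eq_iff], mem_missingPairs hxX hxA hb hbB hadjb, ?_⟩
        simp [hxS]
      · have hxB : x ∈ G.B := (hX hxX).resolve_left hxA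
        refine ⟨by grind [Sym2.eq_iff], mem_missingPairs ha haA hxX hxB ?_, ?_⟩
        · exact fun h => hadja (G.symm _ _ h)
        · simp [hxS]
    · intro x hx y hy hxy
      grind [Sym2.eq_iff, hU x hx, hU y hy]
  refine ⟨{a, b} ∪ U, fun x hx => ?_, ?_⟩
  · simp only [Finset.mem_union, Finset.mem_insert, Finset.mem_singleton, U, Finset.mem_filter]
    grind
  · have hpair : ({a, b} : Finset ℕ).card ≤ 2 := Finset.card_le_two
    have hunion := Finset.card_union_le {a, b} U
    lia

theorem C4Free.exists_dominates_sdiff (hC4 : C4Free G) (hG : Disjoint G.A G.B)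
    (hX : IsBag G X) (S : Finset ℕ) :
    ∃ D, Dominates G D (X \ S) ∧
      D.card ≤ (missingPairs G X \ S.sym2).card + max 1 (X ∩ S).card := by
  classical
  by_cases hold : ∃ a ∈ X ∩ S, ∃ b ∈ X ∩ S, a ∈ G.A ∧ b ∈ G.B
  · obtain ⟨a, ha, b, hb, haA, hbB⟩ := hold
    obtain ⟨D, hD, hcard⟩ := exists_dominates_sdiff_of_pair hX.subset_verts
      (Finset.mem_inter.1 ha).1 haA (Finset.mem_inter.1 hb).1 hbB S
    have hne : a ≠ b := by
      rintro rfl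
      exact Set.disjoint_left.1 hG haA hbB
    have htwo : 1 < (X ∩ S).card := Finset.one_lt_card.2 ⟨a, ha, b, hb, hne⟩
    have herase := Finset.card_erase_le (s := missingPairs G X \ S.sym2) (a := s(a, b))
    exact ⟨D, hD, by lia⟩
  by_cases hbiclique : IsBicliqueOn G X
  · obtain ⟨c, hc⟩ := hC4.exists_dominates_of_isBicliqueOn hX hbiclique
    exact ⟨{c}, hc.mono Finset.sdiff_subset, by rw [Finset.card_singleton]; lia⟩
  · simp only [IsBicliqueOn, not_forall] at hbiclique
    obtain ⟨a, ⟨ha, haA⟩, b, ⟨hb, hbB⟩, hab⟩ := hbiclique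
    obtain ⟨D, hD, hcard⟩ := exists_dominates_sdiff_of_pair hX.subset_verts ha haA hb hbB S
    have hmem : s(a, b) ∈ missingPairs G X \ S.sym2 := by
      rw [Finset.mem_sdiff, Finset.mk_mem_sym2_iff]
      exact ⟨mem_missingPairs ha haA hb hbB hab, fun hS => hold
        ⟨a, Finset.mem_inter.2 ⟨ha, hS.1⟩, b, Finset.mem_inter.2 ⟨hb, hS.2⟩, haA, hbB⟩⟩
    have herase := Finset.card_erase_add_one hmem
    exact ⟨D, hD, by lia⟩

/-- A covering of the vertices of `G` by a family `𝒞` of bags that are bicliques and contain all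
edges, up to the exceptional pairs in `Z`. -/
structure IsBicliqueCover (G : BGraph) (Z : Finset (Sym2 ℕ)) (𝒞 : Finset (Finset ℕ)) : Prop where
  isBag : ∀ X ∈ 𝒞, IsBag G X
  missingPairs_subset : ∀ X ∈ 𝒞, missingPairs G X ⊆ Z
  exists_mem : ∀ v ∈ verts G, ∃ X ∈ 𝒞, v ∈ X
  exists_mem_of_adj : ∀ u v, G.Adj u v → s(u, v) ∉ Z → ∃ X ∈ 𝒞, u ∈ X ∧ v ∈ X

/-- The family `𝒮` of bags is dominated by a set of size at most `1` plus the cost of `𝒮`, that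
is, the number of repetitions of vertices in `𝒮` plus the number of exceptional pairs inside the
union of `𝒮`. All terms are moved to the side where no subtraction occurs. -/
def CheaplyDominated (G : BGraph) (Z : Finset (Sym2 ℕ)) (𝒮 : Finset (Finset ℕ)) : Prop :=
  ∃ D, Dominates G D (𝒮.biUnion id) ∧ D.card + (𝒮.biUnion id).card ≤
    1 + ∑ X ∈ 𝒮, X.card + (Z ∩ (𝒮.biUnion id).sym2).card

variable {Z : Finset (Sym2 ℕ)} {𝒞 𝒮 : Finset (Finset ℕ)}

theorem IsBicliqueCover.cheaplyDominated_singleton (h : IsBicliqueCover G Z 𝒞) (hC4 : C4Free G)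
    (hG : Disjoint G.A G.B) (hX : X ∈ 𝒞) : CheaplyDominated G Z {X} := by
  obtain ⟨D, hD, hcard⟩ := hC4.exists_dominates_sdiff hG (h.isBag X hX) ∅
  have hmissing : (missingPairs G X).card ≤ (Z ∩ X.sym2).card :=
    Finset.card_le_card fun e he => Finset.mem_inter.2
      ⟨h.missingPairs_subset X hX he, (mem_missingPairs_iff.1 he).1⟩
  simp only [Finset.sdiff_empty, Finset.sym2_empty, Finset.inter_empty, Finset.card_empty]
    at hD hcard
  refine ⟨D, by simpa using hD, ?_⟩
  simp only [Finset.singleton_biUnion, id, Finset.sum_singleton]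
  lia

theorem ConnectedB.exists_adj_boundary (hconn : ConnectedB G) {S : Set ℕ}
    (hu : u ∈ verts G) (huS : u ∈ S) (hv : v ∈ verts G) (hvS : v ∉ S) :
    ∃ x ∈ S, ∃ y ∈ verts G, y ∉ S ∧ G.Adj x y := by
  obtain ⟨p⟩ := hconn.preconnected ⟨u, hu⟩ ⟨v, hv⟩
  obtain ⟨d, -, hfst, hsnd⟩ := p.exists_boundary_dart (Subtype.val ⁻¹' S) huS hvS
  exact ⟨d.fst, hfst, d.snd, d.snd.2, hsnd, d.adj.2.elim id (G.symm _ _)⟩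

theorem IsBicliqueCover.exists_overlap_or_mem (h : IsBicliqueCover G Z 𝒞) (hv : v ∈ verts G)
    (huv : G.Adj u v) : ∃ X ∈ 𝒞, v ∈ X ∧ (u ∈ X ∨ s(u, v) ∈ Z) := by
  by_cases hZ : s(u, v) ∈ Z
  · obtain ⟨X, hX, hvX⟩ := h.exists_mem v hv
    exact ⟨X, hX, hvX, .inr hZ⟩
  · obtain ⟨X, hX, huX, hvX⟩ := h.exists_mem_of_adj u v huv hZ
    exact ⟨X, hX, hvX, .inl huX⟩

-- If `X` does not overlap `U`, the exceptional edge `uv` pays for the first vertex dominating `X`.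
theorem IsBicliqueCover.card_exceptional_union (h : IsBicliqueCover G Z 𝒞) (hX : X ∈ 𝒞)
    (hu : u ∈ U) (hvX : v ∈ X) (hvU : v ∉ U) (huv : G.Adj u v) (hpaid : u ∈ X ∨ s(u, v) ∈ Z) :
    (Z ∩ U.sym2).card + (missingPairs G X \ U.sym2).card + (1 - (X ∩ U).card) ≤
      (Z ∩ (X ∪ U).sym2).card := by
  have hN : missingPairs G X \ U.sym2 ⊆ Z ∩ (X ∪ U).sym2 := fun e he => by
    obtain ⟨heX, -⟩ := Finset.mem_sdiff.1 he
    exact Finset.mem_inter.2 ⟨h.missingPairs_subset X hX heX,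
      Finset.sym2_mono Finset.subset_union_left (mem_missingPairs_iff.1 heX).1⟩
  have hU : Z ∩ U.sym2 ⊆ Z ∩ (X ∪ U).sym2 :=
    Finset.inter_subset_inter_left (Finset.sym2_mono Finset.subset_union_right)
  have hdisj : Disjoint (Z ∩ U.sym2) (missingPairs G X \ U.sym2) :=
    Finset.disjoint_sdiff.mono_left Finset.inter_subset_right
  rw [← Finset.card_union_of_disjoint hdisj]
  by_cases huX : u ∈ X
  · have hpos : 0 < (X ∩ U).card := Finset.card_pos.2 ⟨u, Finset.mem_inter.2 ⟨huX, hu⟩⟩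
    have hle := Finset.card_le_card (Finset.union_subset hU hN)
    lia
  · have huvZ : s(u, v) ∈ Z ∩ (X ∪ U).sym2 := by
      simp [hpaid.resolve_left huX, hu, hvX]
    have hnew : s(u, v) ∉ Z ∩ U.sym2 ∪ missingPairs G X \ U.sym2 := by
      simp only [Finset.mem_union, Finset.mem_inter, Finset.mem_sdiff, Finset.mk_mem_sym2_iff]
      exact fun h => h.elim (fun h => hvU h.2.2) fun h => not_adj_of_mem_missingPairs h.1 huv
    have hle := Finset.card_le_card (Finset.insert_subset huvZ (Finset.union_subset hU hN))
    rw [Finset.card_insert_of_notMem hnew] at hle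
    lia

theorem IsBicliqueCover.exists_cheaplyDominated_insert (h : IsBicliqueCover G Z 𝒞)
    (hC4 : C4Free G) (hG : Disjoint G.A G.B) (h𝒮 : CheaplyDominated G Z 𝒮)
    (hu : u ∈ 𝒮.biUnion id) (hv : v ∈ verts G) (hvU : v ∉ 𝒮.biUnion id) (huv : G.Adj u v) :
    ∃ X ∈ 𝒞, X ∉ 𝒮 ∧ CheaplyDominated G Z (insert X 𝒮) := by
  classical
  obtain ⟨X, hX, hvX, hpaid⟩ := h.exists_overlap_or_mem hv huv
  obtain ⟨D, hD, hDcard⟩ := h𝒮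
  have hX𝒮 : X ∉ 𝒮 := fun hmem => hvU (Finset.mem_biUnion.2 ⟨X, hmem, hvX⟩)
  refine ⟨X, hX, hX𝒮, ?_⟩
  rw [CheaplyDominated, Finset.biUnion_insert, Finset.sum_insert hX𝒮, id]
  generalize 𝒮.biUnion id = U at *
  obtain ⟨E, hE, hEcard⟩ := hC4.exists_dominates_sdiff hG (h.isBag X hX) U
  have hdom := hE.union hD
  rw [Finset.sdiff_union_self_eq_union] at hdom
  refine ⟨E ∪ D, hdom, ?_⟩
  have hpairs := h.card_exceptional_union hX hu hvX hvU huv hpaid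
  have hunionD := Finset.card_union_le E D
  have hunionU := Finset.card_union_add_card_inter X U
  lia

theorem IsBicliqueCover.exists_dominates (h : IsBicliqueCover G Z 𝒞) (hC4 : C4Free G)
    (hG : Disjoint G.A G.B) (hconn : ConnectedB G) :
    ∃ D, Dominates G D (vertexFinset G) ∧
      D.card + (vertexFinset G).card ≤ 1 + ∑ X ∈ 𝒞, X.card + Z.card := by
  classical
  obtain ⟨⟨v, hv⟩⟩ := hconn.nonempty
  obtain ⟨X, hX, hvX⟩ := h.exists_mem v hv
  have hfin : {𝒮 | (𝒮 ⊆ 𝒞 ∧ v ∈ 𝒮.biUnion id) ∧ CheaplyDominated G Z 𝒮}.Finite :=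
    𝒞.powerset.finite_toSet.subset fun 𝒮 h𝒮 => Finset.mem_powerset.2 h𝒮.1.1
  obtain ⟨𝒮, ⟨⟨h𝒮𝒞, hv𝒮⟩, h𝒮⟩, hmax⟩ := hfin.exists_maximal
    ⟨{X}, ⟨by simpa using hX, by simpa using hvX⟩, h.cheaplyDominated_singleton hC4 hG hX⟩
  have hcover : vertexFinset G ⊆ 𝒮.biUnion id := by
    by_contra hnot
    obtain ⟨w, hw, hwU⟩ := Finset.not_subset.1 hnot
    obtain ⟨x, hx, y, hy, hyU, hxy⟩ := hconn.exists_adj_boundary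
      (S := 𝒮.biUnion id) hv hv𝒮 (mem_vertexFinset.1 hw) hwU
    obtain ⟨Y, hY, hY𝒮, hcheap⟩ :=
      h.exists_cheaplyDominated_insert hC4 hG h𝒮 hx hy hyU hxy
    have hsub : 𝒮 ⊆ insert Y 𝒮 := Finset.subset_insert Y 𝒮
    have hvY : v ∈ (insert Y 𝒮).biUnion id :=
      Finset.biUnion_subset_biUnion_of_subset_left id hsub hv𝒮
    exact hY𝒮 (hmax ⟨⟨Finset.insert_subset hY h𝒮𝒞, hvY⟩, hcheap⟩ hsub
      (Finset.mem_insert_self Y 𝒮))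
  obtain ⟨D, hD, hcard⟩ := h𝒮
  have hverts := Finset.card_le_card hcover
  have hsum : ∑ X ∈ 𝒮, X.card ≤ ∑ X ∈ 𝒞, X.card := Finset.sum_le_sum_of_subset h𝒮𝒞
  have hZ : (Z ∩ (𝒮.biUnion id).sym2).card ≤ Z.card :=
    Finset.card_le_card Finset.inter_subset_left
  exact ⟨D, hD.mono hcover, by lia⟩

/-! ### Bicliques of a projecting graph -/

open Classical in
/-- The partition of the vertices of `H` into its connected components. -/
noncomputable def components (H : BGraph) : Finpartition (vertexFinset H) :=
  Finpartition.ofSetSetoid (SimpleGraph.fromRel H.Adj).reachableSetoid (vertexFinset H)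

theorem mem_components {P : Finset ℕ} : P ∈ (components H).parts ↔
    ∃ x ∈ verts H, ∀ y, y ∈ P ↔ y ∈ verts H ∧ (SimpleGraph.fromRel H.Adj).Reachable x y := by
  classical
  rw [components, Finpartition.ofSetSetoid_parts, Finset.mem_image]
  refine exists_congr fun x => and_congr mem_vertexFinset ?_
  rw [eq_comm, Finset.ext_iff]
  refine forall_congr' fun y => ?_
  rw [Finset.mem_filter, mem_vertexFinset]
  rfl

theorem IsBicliqueUnion.reachable (hH : IsBicliqueUnion H) {x z : ℕ}
    (h : (SimpleGraph.fromRel H.Adj).Reachable x z) :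
    x = z ∨ H.Adj x z ∨ ∃ y, H.Adj x y ∧ H.Adj y z := by
  obtain ⟨p⟩ := h
  induction p with
  | nil => exact .inl rfl
  | @cons x y z hxy _ ih =>
    have hxy : H.Adj x y := hxy.2.elim id (H.symm _ _)
    rcases ih with rfl | hyz | ⟨w, hyw, hwz⟩
    · exact .inr (.inl hxy)
    · exact .inr (.inr ⟨y, hxy, hyz⟩)
    · exact .inr (.inl (hH x y w z hxy hyw hwz))

theorem IsBicliqueUnion.adj_of_reachable (hH : IsBicliqueUnion H) (hbip : Bipartite H)
    (ha : a ∈ H.A) (hb : b ∈ H.B) (h : (SimpleGraph.fromRel H.Adj).Reachable a b) :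
    H.Adj a b := by
  rcases hH.reachable h with rfl | hab | ⟨y, hay, hyb⟩
  · exact absurd hb (hbip.notMem_B ha)
  · exact hab
  · have hy : y ∈ H.B := (hbip.2 a y hay).elim And.right fun h => absurd h.1 (hbip.notMem_B ha)
    rcases hbip.2 y b hyb with ⟨hyA, -⟩ | ⟨-, hbA⟩
    · exact absurd hy (hbip.notMem_B hyA)
    · exact absurd hb (hbip.notMem_B hbA)

theorem Bipartite.reachable_of_adj (hG : Bipartite G) (h : G.Adj u v) :
    (SimpleGraph.fromRel G.Adj).Reachable u v :=
  SimpleGraph.Adj.reachable ⟨hG.ne_of_adj h, .inl h⟩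

variable {π : ℕ → ℕ} {P : Finset ℕ}

theorem ProjectsTo.mapsTo_verts (h : ProjectsTo H G π Z) : Set.MapsTo π (verts H) (verts G) :=
  h.mapsTo_A.union_union h.mapsTo_B

theorem ProjectsTo.isBag_image (h : ProjectsTo H G π Z) (hbip : Bipartite H)
    (hH : IsBicliqueUnion H) (hP : P ∈ (components H).parts) : IsBag G (P.image π) := by
  obtain ⟨x, hx, hmem⟩ := mem_components.1 hP
  constructor
  · intro v hv
    obtain ⟨y, hy, rfl⟩ := Finset.mem_image.1 hv
    exact h.mapsTo_verts ((hmem y).1 hy).1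
  · have hxP : x ∈ P := (hmem x).2 ⟨hx, .rfl⟩
    by_cases hadj : ∃ y, H.Adj x y
    · obtain ⟨y, hxy⟩ := hadj
      have hyP : y ∈ P := (hmem y).2 ⟨hbip.mem_verts_of_adj hxy, hbip.reachable_of_adj hxy⟩
      have hx' := Finset.mem_image_of_mem π hxP
      have hy' := Finset.mem_image_of_mem π hyP
      rcases hbip.2 x y hxy with ⟨hA, hB⟩ | ⟨hB, hA⟩
      · exact .inr ⟨⟨_, hx', h.mapsTo_A hA⟩, _, hy', h.mapsTo_B hB⟩
      · exact .inr ⟨⟨_, hy', h.mapsTo_A hA⟩, _, hx', h.mapsTo_B hB⟩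
    · have hsingle : P = {x} := Finset.eq_singleton_iff_unique_mem.2 ⟨hxP, fun y hy => by
        rcases hH.reachable ((hmem y).1 hy).2 with rfl | hxy | ⟨w, hxw, -⟩
        · rfl
        · exact absurd ⟨y, hxy⟩ hadj
        · exact absurd ⟨w, hxw⟩ hadj⟩
      exact .inl (by rw [hsingle, Finset.image_singleton, Finset.card_singleton])

theorem ProjectsTo.missingPairs_image_subset (h : ProjectsTo H G π Z) (hG : Disjoint G.A G.B)
    (hbip : Bipartite H) (hH : IsBicliqueUnion H) (hP : P ∈ (components H).parts) :
    missingPairs G (P.image π) ⊆ Z := by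
  obtain ⟨x, -, hmem⟩ := mem_components.1 hP
  intro e he
  obtain ⟨hmk, a, ha, b, hb, hab, rfl⟩ := mem_missingPairs_iff.1 he
  rw [Finset.mk_mem_sym2_iff, Finset.mem_image, Finset.mem_image] at hmk
  obtain ⟨⟨y, hy, rfl⟩, z, hz, rfl⟩ := hmk
  by_contra hZ
  have hyA : y ∈ H.A := ((hmem y).1 hy).1.resolve_right
    fun hyB => Set.disjoint_left.1 hG ha (h.mapsTo_B hyB)
  have hzB : z ∈ H.B := ((hmem z).1 hz).1.resolve_left
    fun hzA => Set.disjoint_left.1 hG (h.mapsTo_A hzA) hb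
  have hyz := hH.adj_of_reachable hbip hyA hzB (((hmem y).1 hy).2.symm.trans ((hmem z).1 hz).2)
  exact hab ((h.adj_iff _ _ hZ).2 ⟨y, z, hyz, rfl, rfl⟩)

theorem ProjectsTo.exists_isBicliqueCover (h : ProjectsTo H G π Z) (hG : Disjoint G.A G.B)
    (hbip : Bipartite H) (hH : IsBicliqueUnion H) :
    ∃ 𝒞, IsBicliqueCover G Z 𝒞 ∧ ∑ X ∈ 𝒞, X.card ≤ (vertexFinset H).card := by
  classical
  refine ⟨(components H).parts.image (Finset.image π), ⟨?_, ?_, ?_, ?_⟩, ?_⟩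
  · exact Finset.forall_mem_image.2 fun P hP => h.isBag_image hbip hH hP
  · exact Finset.forall_mem_image.2 fun P hP => h.missingPairs_image_subset hG hbip hH hP
  · intro v hv
    obtain ⟨x, hx, rfl⟩ := h.surjOn hv
    obtain ⟨P, hP, hxP⟩ := (components H).exists_mem (mem_vertexFinset.2 hx)
    exact ⟨_, Finset.mem_image_of_mem _ hP, Finset.mem_image_of_mem π hxP⟩
  · intro u v huv hZ
    obtain ⟨x, y, hxy, rfl, rfl⟩ := (h.adj_iff u v hZ).1 huv
    have hy := hbip.mem_verts_of_adj hxy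
    have hx := hbip.mem_verts_of_adj (H.symm _ _ hxy)
    obtain ⟨P, hP, hxP⟩ := (components H).exists_mem (mem_vertexFinset.2 hx)
    obtain ⟨w, -, hmem⟩ := mem_components.1 hP
    have hyP : y ∈ P := (hmem y).2 ⟨hy, ((hmem x).1 hxP).2.trans (hbip.reachable_of_adj hxy)⟩
    exact ⟨_, Finset.mem_image_of_mem _ hP, Finset.mem_image_of_mem π hxP,
      Finset.mem_image_of_mem π hyP⟩
  · calc ∑ X ∈ (components H).parts.image (Finset.image π), X.card
        ≤ ∑ P ∈ (components H).parts, (P.image π).card :=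
          Finset.sum_image_le_of_nonneg fun _ _ => Nat.zero_le _
      _ ≤ ∑ P ∈ (components H).parts, P.card := Finset.sum_le_sum fun _ _ => Finset.card_image_le
      _ = (vertexFinset H).card := (components H).sum_card_parts

theorem C4Free.dominationNumber_le_of_solves (hC4 : C4Free G) (hG : Bipartite G)
    (hconn : ConnectedB G) (hL : Solves sA sB L G) : dominationNumber G ≤ L.length + 1 := by
  obtain ⟨H, hseq, hH⟩ := hL
  obtain ⟨π, Z, hπ, hZ⟩ := hseq.exists_projectsTo hG
  obtain ⟨𝒞, h𝒞, hsum⟩ := hπ.exists_isBicliqueCover hG.1 (hseq.bipartite hG) hH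
  obtain ⟨D, hD, hcard⟩ := h𝒞.exists_dominates hC4 hG.1 hconn
  have hle : dominationNumber G ≤ D.card := Nat.sInf_le ⟨D, hD, rfl⟩
  lia

/-! ### Trees and deletions of edges -/

theorem eq_of_common_neighbors_of_isAcyclic {V : Type*} {T : SimpleGraph V} (hT : T.IsAcyclic)
    {a a' b b' : V} (hne : a ≠ a') (hab : T.Adj a b) (ha'b : T.Adj a' b) (hab' : T.Adj a b')
    (ha'b' : T.Adj a' b') : b = b' := by
  have hpath : ∀ c, T.Adj a c → T.Adj a' c → ∃ p : T.Path a a', p.1.snd = c := fun c hac ha'c =>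
    ⟨⟨.cons hac (.cons ha'c.symm .nil), by simp [hne, hac.ne, ha'c.ne']⟩, by simp⟩
  obtain ⟨p, rfl⟩ := hpath b hab ha'b
  obtain ⟨q, rfl⟩ := hpath b' hab' ha'b'
  rw [(hT.subsingleton_path a a').elim p q]

theorem Bipartite.induce_fromRel_adj (hG : Bipartite G) (u v : verts G) :
    (SimpleGraph.induce (verts G) (SimpleGraph.fromRel G.Adj)).Adj u v ↔ G.Adj u v :=
  ⟨fun h => h.2.elim id (G.symm _ _), fun h => ⟨hG.ne_of_adj h, .inl h⟩⟩

theorem IsTreeB.c4Free (hT : IsTreeB G) (hG : Bipartite G) : C4Free G := by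
  intro a a' b b' hab ha'b hab' ha'b'
  by_contra! hne
  have ha := hG.mem_verts_of_adj (G.symm _ _ hab)
  have ha' := hG.mem_verts_of_adj (G.symm _ _ ha'b)
  have hb := hG.mem_verts_of_adj hab
  have hb' := hG.mem_verts_of_adj hab'
  have heq := eq_of_common_neighbors_of_isAcyclic hT.isAcyclic
    (a := ⟨a, ha⟩) (a' := ⟨a', ha'⟩) (b := ⟨b, hb⟩) (b' := ⟨b', hb'⟩)
    (fun h => hne.1 (congrArg Subtype.val h)) ((hG.induce_fromRel_adj _ _).2 hab)
    ((hG.induce_fromRel_adj _ _).2 ha'b) ((hG.induce_fromRel_adj _ _).2 hab')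
    ((hG.induce_fromRel_adj _ _).2 ha'b')
  exact hne.2 (congrArg Subtype.val heq)

open Classical in
/-- The edge set of `G`, as a finset of unordered pairs so that it can be counted. -/
noncomputable def edges (G : BGraph) : Finset (Sym2 ℕ) :=
  (vertexFinset G).sym2.filter (· ∈ (SimpleGraph.fromRel G.Adj).edgeSet)

theorem Bipartite.mem_edges (hG : Bipartite G) : s(u, v) ∈ edges G ↔ G.Adj u v := by
  classical
  rw [edges, Finset.mem_filter, Finset.mk_mem_sym2_iff, mem_vertexFinset, mem_vertexFinset,
    SimpleGraph.mem_edgeSet]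
  exact ⟨fun h => h.2.2.elim id (G.symm _ _), fun h =>
    ⟨⟨hG.mem_verts_of_adj (G.symm _ _ h), hG.mem_verts_of_adj h⟩, hG.ne_of_adj h, .inl h⟩⟩

theorem IsTreeB.card_edges_add_one_le (hT : IsTreeB G) (hG : Bipartite G) :
    (edges G).card + 1 ≤ (vertexFinset G).card := by
  classical
  have : Fintype (verts G) := (verts_finite G).fintype
  have hcard := hT.card_edgeFinset
  have hsub : edges G ⊆ (SimpleGraph.induce (verts G)
      (SimpleGraph.fromRel G.Adj)).edgeFinset.image (Sym2.map Subtype.val) := by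
    intro e he
    induction e with | _ u v => ?_
    have huv := hG.mem_edges.1 he
    refine Finset.mem_image.2 ⟨s(⟨u, hG.mem_verts_of_adj (G.symm _ _ huv)⟩,
      ⟨v, hG.mem_verts_of_adj huv⟩), ?_, rfl⟩
    rw [SimpleGraph.mem_edgeFinset, SimpleGraph.mem_edgeSet]
    exact (hG.induce_fromRel_adj _ _).2 huv
  have hle := (Finset.card_le_card hsub).trans Finset.card_image_le
  have hverts : Fintype.card (verts G) = (vertexFinset G).card :=
    Fintype.card_of_finset' _ fun _ => mem_vertexFinset
  lia

/-- The graph obtained from `G` by deleting the edges in `R`: the common result of the deletion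
sequences for `R`, in any order. -/
def deleteEdges (G : BGraph) (R : Finset (Sym2 ℕ)) : BGraph where
  A := G.A
  B := G.B
  finA := G.finA
  finB := G.finB
  Adj u v := G.Adj u v ∧ s(u, v) ∉ R
  symm u v h := ⟨G.symm u v h.1, Sym2.eq_swap (a := u) (b := v) ▸ h.2⟩

@[simp]
theorem deleteEdges_empty (G : BGraph) : deleteEdges G ∅ = G := by
  simp [deleteEdges]

theorem deleteEdges_deleteEdges (G : BGraph) (R R' : Finset (Sym2 ℕ)) :
    deleteEdges (deleteEdges G R) R' = deleteEdges G (R ∪ R') := by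
  simp [deleteEdges, and_assoc]

theorem exists_applySeq_deleteEdges {R : Finset (Sym2 ℕ)}
    (hR : ∀ u v, s(u, v) ∈ R → G.Adj u v) :
    ∃ L, L.length = R.card ∧ (∀ op ∈ L, ¬ IsSplitOp op) ∧
      ∀ sA sB, ApplySeq sA sB L G (deleteEdges G R) := by
  induction R using Finset.induction_on generalizing G with
  | empty => exact ⟨[], rfl, by simp, fun _ _ => deleteEdges_empty G⟩
  | @insert e R he ih =>
    induction e with | _ u v => ?_
    have hR' : ∀ x y, s(x, y) ∈ R → (deleteEdges G {s(u, v)}).Adj x y := fun x y hxy =>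
      ⟨hR x y (Finset.mem_insert_of_mem hxy), fun h => he (Finset.mem_singleton.1 h ▸ hxy)⟩
    obtain ⟨L, hlen, hsplit, hL⟩ := ih hR'
    rw [deleteEdges_deleteEdges, ← Finset.insert_eq] at hL
    refine ⟨.del u v :: L, by rw [List.length_cons, hlen, Finset.card_insert_of_notMem he],
      List.forall_mem_cons.2 ⟨id, hsplit⟩, fun sA sB => ⟨_, ?_, hL sA sB⟩⟩
    exact .del (hR u v (Finset.mem_insert_self _ _)) rfl rfl fun x y => by simp [deleteEdges]

theorem isBicliqueUnion_of_forall_adj {D : Set ℕ} {f : ℕ → ℕ}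
    (h : ∀ x y, H.Adj x y → (x ∉ D ∧ y ∈ D ∧ y = f x) ∨ (y ∉ D ∧ x ∈ D ∧ x = f y)) :
    IsBicliqueUnion H := by
  intro a b c d hab hbc hcd
  have hstar : a = c ∨ b = d := by grind
  rcases hstar with rfl | rfl
  · exact hcd
  · exact hab

theorem Bipartite.exists_isBicliqueUnion_deleteEdges (hG : Bipartite G)
    (hD : Dominates G D (vertexFinset G)) :
    ∃ R ⊆ edges G, IsBicliqueUnion (deleteEdges G R) ∧
      R.card + (vertexFinset G).card ≤ (edges G).card + D.card := by
  classical
  have hdom : ∀ v ∈ vertexFinset G \ D, ∃ d ∈ D, G.Adj v d := fun v hv =>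
    (hD v (Finset.mem_sdiff.1 hv).1).resolve_left (Finset.mem_sdiff.1 hv).2
  choose! f hfD hf using hdom
  let F := (vertexFinset G \ D).image fun v => s(v, f v)
  have hF : F ⊆ edges G := Finset.image_subset_iff.2 fun v hv => hG.mem_edges.2 (hf v hv)
  have hinj : Set.InjOn (fun v => s(v, f v)) (vertexFinset G \ D : Finset ℕ) := by
    intro v hv w hw hvw
    rcases Sym2.eq_iff.1 hvw with ⟨h, -⟩ | ⟨h, -⟩
    · exact h
    · exact absurd (h ▸ hfD w hw) (Finset.mem_sdiff.1 hv).2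
  refine ⟨edges G \ F, Finset.sdiff_subset, ?_, ?_⟩
  · refine isBicliqueUnion_of_forall_adj (D := D) (f := f) fun x y hxy => ?_
    have hxyF : s(x, y) ∈ F := by
      by_contra h
      exact hxy.2 (Finset.mem_sdiff.2 ⟨hG.mem_edges.2 hxy.1, h⟩)
    obtain ⟨v, hv, hveq⟩ := Finset.mem_image.1 hxyF
    have hvD := (Finset.mem_sdiff.1 hv).2
    rcases Sym2.eq_iff.1 hveq with ⟨rfl, rfl⟩ | ⟨rfl, rfl⟩
    · exact .inl ⟨hvD, hfD v hv, rfl⟩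
    · exact .inr ⟨hvD, hfD v hv, rfl⟩
  · have hcardF : F.card = (vertexFinset G \ D).card := Finset.card_image_of_injOn hinj
    have hsdiff := Finset.card_sdiff_add_card_eq_card hF
    have hle := Finset.le_card_sdiff D (vertexFinset G)
    lia

theorem exists_dominates_card_eq_dominationNumber (G : BGraph) :
    ∃ D, Dominates G D (vertexFinset G) ∧ D.card = dominationNumber G :=
  Nat.sInf_mem (s := {n | ∃ D, Dominates G D (vertexFinset G) ∧ D.card = n})
    ⟨_, vertexFinset G, fun _ hv => .inl hv, rfl⟩

theorem IsTreeB.exists_solves_of_deletions (hT : IsTreeB G) (hG : Bipartite G) :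
    ∃ L, L.length + 1 ≤ dominationNumber G ∧ (∀ op ∈ L, ¬ IsSplitOp op) ∧
      ∀ sA sB, Solves sA sB L G := by
  obtain ⟨D, hD, hcard⟩ := exists_dominates_card_eq_dominationNumber G
  obtain ⟨R, hR, hbiclique, hRcard⟩ := hG.exists_isBicliqueUnion_deleteEdges hD
  obtain ⟨L, hlen, hsplit, hL⟩ :=
    exists_applySeq_deleteEdges fun u v huv => hG.mem_edges.1 (hR huv)
  have hedges := hT.card_edges_add_one_le hG
  exact ⟨L, by lia, hsplit, fun sA sB => ⟨_, hL sA sB, hbiclique⟩⟩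

/-- For every tree `T = (A, B, E)`, `bceovs(T, A) = bcevs(T)`,
and this common value is achieved by an optimal sequence consisting only of
edge editions (no vertex splitting). -/
theorem tree_bceovs_eq_bcevs (G : BGraph) (hbip : Bipartite G)
    (htree : IsTreeB G) :
    bceovs G = bcevs G ∧
    ∃ L, L.length = bcevs G ∧ Solves true true L G ∧
      ∀ op ∈ L, ¬ IsSplitOp op := by
  obtain ⟨K, hK, hsplit, hsolves⟩ := htree.exists_solves_of_deletions hbip
  have hleast (sA sB : Bool) :
      IsLeast {n | ∃ L, L.length = n ∧ Solves sA sB L G} K.length := by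
    refine ⟨⟨K, rfl, hsolves sA sB⟩, ?_⟩
    rintro _ ⟨L, rfl, hL⟩
    have hle := (htree.c4Free hbip).dominationNumber_le_of_solves hbip htree.connected hL
    lia
  have hbcevs : bcevs G = K.length := (hleast true true).csInf_eq
  have hbceovs : bceovs G = K.length := (hleast true false).csInf_eq
  exact ⟨hbceovs.trans hbcevs.symm, K, hbcevs.symm, hsolves true true, hsplit⟩

end BCE
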